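/- arXiv:1607.00346 — 2 statements merged into one kernel-verified Lean document; each statement's English description precedes it below -/
import Mathlib

section
/- Let n > 2 be an integer, h = 1/n, let b : (ZMod n)³ → ℝ and α_i : (ZMod n)³ → ℝ for i ∈ {1,2,3} be given with α_i(j) > 0 and b(j) > 0 for all j and i, and let A be the periodic seven-point stencil matrix indexed by (ZMod n)³ with A(j,j) = (1/h²)·Σ_{i=1}^{3}(α_i(j) + α_i(j−e_i)) + b(j), A(j, j+e_i) = A(j+e_i, j) = −(1/h²)·α_i(j), and all other entries zero. Then A is symmetric positive definite. -/
open Matrix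

/-!
Join `j` to `j + e i` by an edge of weight `w i j = α i j / h ^ 2`. The diagonal entry at `j` is
`b j` plus the total weight of the edges at `j`, and this total bounds the absolute row sum off the
diagonal. So the matrix is strictly diagonally dominant, its Gershgorin discs lie to the right of
`0`, and hence so do its eigenvalues, which are real by symmetry.
-/

section DiagonalDominance

variable {𝕜 m : Type*} [RCLike 𝕜] [Fintype m] [DecidableEq m] {A : Matrix m m 𝕜}

lemma hasEigenvalue_toLin'_eigenvalues (hA : A.IsHermitian) (i : m) :
    Module.End.HasEigenvalue (Matrix.toLin' A) (hA.eigenvalues i : 𝕜) := by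
  rw [Module.End.hasEigenvalue_iff_mem_spectrum, Matrix.spectrum_toLin',
    hA.spectrum_eq_image_range]
  exact Set.mem_image_of_mem _ (Set.mem_range_self i)

open scoped ComplexOrder in
theorem posDef_of_sum_row_lt_diag (hA : A.IsHermitian)
    (hdom : ∀ j, ∑ k ∈ Finset.univ.erase j, ‖A j k‖ < RCLike.re (A j j)) : A.PosDef := by
  refine hA.posDef_iff_eigenvalues_pos.mpr fun i ↦ ?_
  obtain ⟨j, hj⟩ := eigenvalue_mem_ball (hasEigenvalue_toLin'_eigenvalues hA i)
  have hball : ‖A j j - hA.eigenvalues i‖ < RCLike.re (A j j) :=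
    (mem_closedBall_iff_norm'.mp hj).trans_lt (hdom j)
  have hre : RCLike.re (A j j) - hA.eigenvalues i ≤ ‖A j j - hA.eigenvalues i‖ := by
    simpa only [map_sub, RCLike.ofReal_re] using RCLike.re_le_norm (A j j - hA.eigenvalues i)
  linarith

end DiagonalDominance

lemma sum_le_sum_comp_of_forall_mem_range {κ σ M : Type*} [Fintype σ] [AddCommMonoid M]
    [PartialOrder M] [IsOrderedAddMonoid M] {s : Finset κ} {f : κ → M} (g : σ → κ)
    (hf : ∀ k, 0 ≤ f k) (hs : ∀ k ∈ s, f k ≠ 0 → k ∈ Set.range g) :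
    ∑ k ∈ s, f k ≤ ∑ x, f (g x) := by
  classical
  have hsub : {k ∈ s | f k ≠ 0} ⊆ Finset.univ.image g := fun k hk ↦ by
    obtain ⟨hks, hfk⟩ := Finset.mem_filter.mp hk
    simpa using hs k hks hfk
  calc ∑ k ∈ s, f k = ∑ k ∈ s with f k ≠ 0, f k := (Finset.sum_filter_ne_zero s).symm
    _ ≤ ∑ k ∈ Finset.univ.image g, f k :=
        Finset.sum_le_sum_of_subset_of_nonneg hsub fun k _ _ ↦ hf k
    _ ≤ ∑ x, f (g x) := Finset.sum_image_le_of_nonneg fun k _ ↦ hf k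

lemma isSymm_of_stencil {G ι R : Type*} [AddGroup G] [Zero R] {e : ι → G} {A : Matrix G G R}
    (hoff : ∀ j i, A j (j + e i) = A (j + e i) j)
    (hzero : ∀ j k, k ≠ j → (∀ i, k ≠ j + e i ∧ k ≠ j - e i) → A j k = 0) : A.IsSymm := by
  refine Matrix.IsSymm.ext fun j k ↦ ?_
  by_cases hkj : k = j
  · rw [hkj]
  by_cases hfwd : ∃ i, k = j + e i
  · obtain ⟨i, rfl⟩ := hfwd
    exact (hoff j i).symm
  by_cases hbwd : ∃ i, j = k + e i
  · obtain ⟨i, rfl⟩ := hbwd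
    exact hoff k i
  push Not at hfwd hbwd
  rw [hzero j k hkj fun i ↦ ⟨hfwd i, fun h ↦ hbwd i (eq_sub_iff_add_eq.mp h).symm⟩,
    hzero k j (Ne.symm hkj) fun i ↦ ⟨hbwd i, fun h ↦ hfwd i (eq_sub_iff_add_eq.mp h).symm⟩]

lemma sum_erase_norm_le_of_stencil {G ι E : Type*} [AddGroup G] [Fintype G] [DecidableEq G]
    [Fintype ι] [SeminormedAddGroup E] {e : ι → G} {f : G → E} {j : G}
    (hzero : ∀ k, k ≠ j → (∀ i, k ≠ j + e i ∧ k ≠ j - e i) → f k = 0) :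
    ∑ k ∈ Finset.univ.erase j, ‖f k‖ ≤ ∑ i, (‖f (j + e i)‖ + ‖f (j - e i)‖) := by
  let neighbor : ι ⊕ ι → G := Sum.elim (fun i ↦ j + e i) (fun i ↦ j - e i)
  have hrange : ∀ k ∈ Finset.univ.erase j, ‖f k‖ ≠ 0 → k ∈ Set.range neighbor := by
    intro k hk hfk
    by_contra hnot
    simp only [neighbor, Set.mem_range, Sum.exists, Sum.elim_inl, Sum.elim_inr, not_or,
      not_exists] at hnot
    refine hfk ?_
    rw [hzero k (Finset.ne_of_mem_erase hk) fun i ↦ ⟨Ne.symm (hnot.1 i), Ne.symm (hnot.2 i)⟩,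
      norm_zero]
  calc ∑ k ∈ Finset.univ.erase j, ‖f k‖ ≤ ∑ x, ‖f (neighbor x)‖ :=
        sum_le_sum_comp_of_forall_mem_range neighbor (fun _ ↦ norm_nonneg _) hrange
    _ = ∑ i, (‖f (j + e i)‖ + ‖f (j - e i)‖) := by
        simp only [neighbor, Fintype.sum_sum_type, Sum.elim_inl, Sum.elim_inr,
          Finset.sum_add_distrib]

theorem seven_point_stencil_posDef_general {G ι : Type*} [AddGroup G] [Finite G] [Fintype ι]
    {e : ι → G} {w : ι → G → ℝ} {b : G → ℝ} (hw : ∀ i j, 0 ≤ w i j) (hb : ∀ j, 0 < b j)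
    {A : Matrix G G ℝ} (hdiag : ∀ j, A j j = ∑ i, (w i j + w i (j - e i)) + b j)
    (hoff : ∀ j i, A j (j + e i) = -w i j ∧ A (j + e i) j = -w i j)
    (hzero : ∀ j k, k ≠ j → (∀ i, k ≠ j + e i ∧ k ≠ j - e i) → A j k = 0) :
    A.PosDef := by
  classical
  have := Fintype.ofFinite G
  have hherm : A.IsHermitian := by
    rw [Matrix.IsHermitian, Matrix.conjTranspose_eq_transpose_of_trivial]
    exact isSymm_of_stencil (fun j i ↦ (hoff j i).1.trans (hoff j i).2.symm) hzero
  have hfwd : ∀ j i, ‖A j (j + e i)‖ = w i j := fun j i ↦ by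
    rw [(hoff j i).1, norm_neg, Real.norm_of_nonneg (hw i j)]
  have hbwd : ∀ j i, ‖A j (j - e i)‖ = w i (j - e i) := fun j i ↦ by
    have hentry : A j (j - e i) = -w i (j - e i) := by simpa using (hoff (j - e i) i).2
    rw [hentry, norm_neg, Real.norm_of_nonneg (hw i _)]
  refine posDef_of_sum_row_lt_diag hherm fun j ↦ ?_
  calc ∑ k ∈ Finset.univ.erase j, ‖A j k‖
      ≤ ∑ i, (‖A j (j + e i)‖ + ‖A j (j - e i)‖) := sum_erase_norm_le_of_stencil (hzero j)
    _ = ∑ i, (w i j + w i (j - e i)) := by simp only [hfwd, hbwd]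
    _ < A j j := by rw [hdiag j]; exact lt_add_of_pos_right _ (hb j)

/-- **Positive definiteness of the periodic seven-point stencil matrix.**  On the periodic
grid `(ZMod n)³` (with `n > 2`, grid spacing `h = 1/n`, unit shifts `e i = Pi.single i 1`),
if the coefficients satisfy `αᵢ(j) > 0` and `b(j) > 0` for all `i, j`, then the
seven-point stencil matrix `A` of `u ↦ -∇·(a∇u) + b u` is symmetric positive definite. -/
theorem seven_point_stencil_posDef (n : ℕ) [NeZero n] (hn : 2 < n)
    (h : ℝ) (hh : h = 1 / n)
    (b : (Fin 3 → ZMod n) → ℝ) (α : Fin 3 → (Fin 3 → ZMod n) → ℝ)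
    (hα : ∀ (i : Fin 3) j, 0 < α i j) (hb : ∀ j, 0 < b j)
    (A : Matrix (Fin 3 → ZMod n) (Fin 3 → ZMod n) ℝ)
    (hdiag : ∀ j, A j j = 1 / h ^ 2 * (∑ i, (α i j + α i (j - Pi.single i 1))) + b j)
    (hoff : ∀ j (i : Fin 3), A j (j + Pi.single i 1) = -(1 / h ^ 2) * α i j ∧
      A (j + Pi.single i 1) j = -(1 / h ^ 2) * α i j)
    (hzero : ∀ j k, k ≠ j →
      (∀ i : Fin 3, k ≠ j + Pi.single i 1 ∧ k ≠ j - Pi.single i 1) → A j k = 0) :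
    A.PosDef := by
  refine seven_point_stencil_posDef_general (w := fun i j ↦ 1 / h ^ 2 * α i j)
    (fun i j ↦ mul_nonneg (by positivity) (hα i j).le) hb ?_ (by simpa using hoff) hzero
  simpa only [Finset.mul_sum, mul_add] using hdiag
end

section
/- Let n > 2 be an integer, h = 1/n, let b : (ZMod n)³ → ℝ and α_i : (ZMod n)³ → ℝ for i ∈ {1,2,3} be given with α_i(j) > 0 and b(j) ≥ 0 for all j and i, and let A be the periodic seven-point stencil matrix indexed by (ZMod n)³ with A(j,j) = (1/h²)·Σ_{i=1}^{3}(α_i(j) + α_i(j−e_i)) + b(j), A(j, j+e_i) = A(j+e_i, j) = −(1/h²)·α_i(j), and all other entries zero. Then A is symmetric positive semidefinite; moreover, uᵀ A u = 0 for a vector u : (ZMod n)³ → ℝ if and only if u is constant on the grid and b(j)·u(j)² = 0 for all j. -/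
open Matrix

/-!
The stencil matrix factors as `A = Dᵀ W D + diag b`, where `(D u)(i, j) = u(j + eᵢ) - u(j)` and `W`
is diagonal with entries `αᵢ(j) / h²`. The distinctness of the stencil points (`n > 2`), in the
form that the `eᵢ` are distinct and `eᵢ + eₖ ≠ 0` for all `i`, `k` (so also `eᵢ ≠ 0`), makes the
prescribed entries of `A` agree with those of this product. Hence
`uᵀ A u = ∑ᵢ ∑ⱼ αᵢ(j) / h² (u(j + eᵢ) - u(j))² + ∑ⱼ b(j) u(j)²`, a sum of nonnegative terms.
It vanishes only if every `eᵢ` is a period of `u`, and the `eᵢ` generate the grid.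
-/

theorem eq_of_periodic_of_closure_eq_top {G β : Type*} [AddGroup G] {S : Set G}
    (hS : AddSubgroup.closure S = ⊤) {u : G → β} (hu : ∀ s ∈ S, Function.Periodic u s) (j k : G) :
    u j = u k := by
  have periodic_of_mem (v : G) (hv : v ∈ AddSubgroup.closure S) : Function.Periodic u v := by
    induction hv using AddSubgroup.closure_induction with
    | mem s hs => exact hu s hs
    | zero => simp
    | add v w _ _ hv hw => exact hv.add_period hw
    | neg v _ hv => exact hv.neg
  simpa using periodic_of_mem (-k + j) (hS ▸ AddSubgroup.mem_top _) k

section CoordinateShifts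

variable {ι : Type*} [DecidableEq ι]

theorem closure_range_single_one_eq_top [Finite ι] (n : ℕ) :
    AddSubgroup.closure (Set.range fun i : ι ↦ (Pi.single i 1 : ι → ZMod n)) = ⊤ := by
  apply (AddSubgroup.toZModSubmodule n).injective
  rw [map_top, eq_top_iff, ← (Pi.basisFun (ZMod n) ι).span_eq, Submodule.span_le]
  rintro _ ⟨i, rfl⟩
  simpa using AddSubgroup.subset_closure (Set.mem_range_self i)

theorem injective_single_one {R : Type*} [Zero R] [One R] [NeZero (1 : R)] :
    Function.Injective fun i : ι ↦ (Pi.single i 1 : ι → R) := by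
  intro i k hik
  by_contra hne
  simpa [hne] using congrFun hik i

theorem single_one_add_single_one_ne_zero {R : Type*} [AddMonoidWithOne R]
    (h2 : (2 : R) ≠ 0) (i k : ι) : (Pi.single i 1 + Pi.single k 1 : ι → R) ≠ 0 := by
  intro hik
  have coord := congrFun hik i
  have h1 : (1 : R) ≠ 0 := fun h ↦ h2 (by rw [← one_add_one_eq_two, h, add_zero])
  rcases eq_or_ne i k with rfl | hne
  · exact h2 (by simpa [one_add_one_eq_two] using coord)
  · exact h1 (by simpa [hne] using coord)

theorem zmod_two_ne_zero {n : ℕ} (hn : 2 < n) : (2 : ZMod n) ≠ 0 := by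
  exact_mod_cast (ZMod.natCast_eq_zero_iff 2 n).not.mpr (Nat.not_dvd_of_pos_of_lt two_pos hn)

end CoordinateShifts

section Stencil

variable {G ι R : Type*} [AddGroup G] [DecidableEq G]

/-- The matrix `D` of the forward differences along the shifts `e i`, with rows indexed by the
edges `(i, j)` from `j` to `j + e i`. -/
def forwardDifference (R : Type*) [Ring R] (e : ι → G) : Matrix (ι × G) G R :=
  .of fun p k ↦ (1 : Matrix G G R) (p.2 + e p.1) k - (1 : Matrix G G R) p.2 k

theorem forwardDifference_mulVec [Fintype G] [Ring R] (e : ι → G) (u : G → R) (p : ι × G) :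
    (forwardDifference R e *ᵥ u) p = u (p.2 + e p.1) - u p.2 := by
  simp [forwardDifference, mulVec, dotProduct, sub_mul, one_apply]

variable [Fintype G] [Fintype ι]

theorem transpose_forwardDifference_mul_apply {κ : Type*} [Ring R] (e : ι → G)
    (M : Matrix (ι × G) κ R) (j : G) (k : κ) :
    ((forwardDifference R e)ᵀ * M) j k = ∑ i, (M (i, j - e i) k - M (i, j) k) := by
  simp [forwardDifference, mul_apply, sub_mul, one_apply, Fintype.sum_prod_type,
    ← eq_sub_iff_add_eq]

variable [DecidableEq ι]

/-- The finite-difference stencil operator `Dᵀ W D + diag b` in divergence form, with shifts `e`,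
edge weights `w` (`w i j` sits on the edge from `j` to `j + e i`) and potential `b`. -/
def stencilMatrix [Ring R] (e : ι → G) (w : ι → G → R) (b : G → R) : Matrix G G R :=
  (forwardDifference R e)ᵀ * diagonal (fun p : ι × G ↦ w p.1 p.2) * forwardDifference R e +
    diagonal b

theorem stencilMatrix_apply [Ring R] (e : ι → G) (w : ι → G → R) (b : G → R) (j k : G) :
    stencilMatrix e w b j k =
      ∑ i, (w i j * ((1 : Matrix G G R) j k - (1 : Matrix G G R) (j + e i) k) +
        w i (j - e i) * ((1 : Matrix G G R) j k - (1 : Matrix G G R) (j - e i) k)) +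
      diagonal b j k := by
  rw [stencilMatrix, Matrix.add_apply, Matrix.mul_assoc, transpose_forwardDifference_mul_apply]
  congr! 2 with i
  simp only [diagonal_mul, forwardDifference, of_apply, one_apply, sub_add_cancel, mul_sub]
  abel

theorem eq_stencilMatrix [Ring R] {e : ι → G} {w : ι → G → R} {b : G → R}
    (he : Function.Injective e) (hne : ∀ i k, e i + e k ≠ 0) {A : Matrix G G R}
    (hdiag : ∀ j, A j j = ∑ i, (w i j + w i (j - e i)) + b j)
    (hfwd : ∀ j i, A j (j + e i) = -w i j) (hbwd : ∀ j i, A (j + e i) j = -w i j)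
    (hzero : ∀ j k, k ≠ j → (∀ i, k ≠ j + e i ∧ k ≠ j - e i) → A j k = 0) :
    A = stencilMatrix e w b := by
  have e_ne_zero (i : ι) : e i ≠ 0 := fun h ↦ hne i i (by simp [h])
  have forward (j : G) (i : ι) : stencilMatrix e w b j (j + e i) = -w i j := by
    simp [stencilMatrix_apply, one_apply, e_ne_zero, he.eq_iff, sub_eq_add_neg,
      neg_eq_iff_add_eq_zero, hne]
  have backward (j : G) (i : ι) : stencilMatrix e w b (j + e i) j = -w i j := by
    simp [stencilMatrix_apply, one_apply, e_ne_zero, he.eq_iff, add_assoc, hne,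
      sub_eq_iff_eq_add]
  ext j k
  by_cases hkj : k = j
  · subst hkj
    simp [hdiag, stencilMatrix_apply, e_ne_zero]
  by_cases hk : ∀ i, k ≠ j + e i ∧ k ≠ j - e i
  · rw [hzero j k hkj hk]
    simp [stencilMatrix_apply, Ne.symm hkj, fun i ↦ (hk i).1.symm, fun i ↦ (hk i).2.symm]
  obtain ⟨i, hi⟩ := not_forall.mp hk
  obtain rfl | rfl : k = j + e i ∨ j = k + e i := by
    rwa [not_and_or, not_not, not_not, eq_sub_iff_add_eq, eq_comm (b := j)] at hi
  · rw [hfwd, forward]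
  · rw [hbwd, backward]

theorem isSymm_stencilMatrix [CommRing R] (e : ι → G) (w : ι → G → R) (b : G → R) :
    (stencilMatrix e w b).IsSymm := by
  simp [Matrix.IsSymm, stencilMatrix, Matrix.mul_assoc]

theorem dotProduct_stencilMatrix_mulVec [CommRing R] (e : ι → G) (w : ι → G → R) (b u : G → R) :
    u ⬝ᵥ stencilMatrix e w b *ᵥ u =
      ∑ p : ι × G, w p.1 p.2 * (u (p.2 + e p.1) - u p.2) ^ 2 + ∑ j, b j * u j ^ 2 := by
  rw [stencilMatrix, add_mulVec, dotProduct_add, ← mulVec_mulVec, ← mulVec_mulVec,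
    dotProduct_mulVec, vecMul_transpose]
  simp only [dotProduct, mulVec_diagonal, forwardDifference_mulVec]
  congr! 2 <;> ring

section Order

variable [CommRing R] [LinearOrder R] [IsStrictOrderedRing R]
  {e : ι → G} {w : ι → G → R} {b : G → R}

theorem posSemidef_stencilMatrix [StarRing R] [TrivialStar R] (hw : ∀ i j, 0 ≤ w i j)
    (hb : ∀ j, 0 ≤ b j) : (stencilMatrix e w b).PosSemidef := by
  refine .of_dotProduct_mulVec_nonneg ?_ fun u ↦ ?_
  · rw [Matrix.IsHermitian, conjTranspose_eq_transpose_of_trivial, isSymm_stencilMatrix]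
  · rw [star_trivial, dotProduct_stencilMatrix_mulVec]
    exact add_nonneg (Finset.sum_nonneg fun p _ ↦ mul_nonneg (hw p.1 p.2) (sq_nonneg _))
      (Finset.sum_nonneg fun j _ ↦ mul_nonneg (hb j) (sq_nonneg _))

theorem dotProduct_stencilMatrix_mulVec_eq_zero_iff (hw : ∀ i j, 0 < w i j) (hb : ∀ j, 0 ≤ b j)
    (hgen : AddSubgroup.closure (Set.range e) = ⊤) (u : G → R) :
    u ⬝ᵥ stencilMatrix e w b *ᵥ u = 0 ↔ (∀ j k, u j = u k) ∧ ∀ j, b j * u j ^ 2 = 0 := by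
  have diff_nonneg (p : ι × G) : 0 ≤ w p.1 p.2 * (u (p.2 + e p.1) - u p.2) ^ 2 :=
    mul_nonneg (hw p.1 p.2).le (sq_nonneg _)
  have potential_nonneg (j : G) : 0 ≤ b j * u j ^ 2 := mul_nonneg (hb j) (sq_nonneg _)
  have diff_eq_zero_iff : (∀ p : ι × G, w p.1 p.2 * (u (p.2 + e p.1) - u p.2) ^ 2 = 0) ↔
      ∀ j k, u j = u k := by
    simp only [mul_eq_zero, (hw _ _).ne', false_or, sq_eq_zero_iff, sub_eq_zero]
    refine ⟨fun h ↦ eq_of_periodic_of_closure_eq_top hgen ?_, fun h p ↦ h _ _⟩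
    rintro _ ⟨i, rfl⟩ j
    exact h (i, j)
  rw [dotProduct_stencilMatrix_mulVec,
    add_eq_zero_iff_of_nonneg (Finset.sum_nonneg fun p _ ↦ diff_nonneg p)
      (Finset.sum_nonneg fun j _ ↦ potential_nonneg j),
    Fintype.sum_eq_zero_iff_of_nonneg diff_nonneg,
    Fintype.sum_eq_zero_iff_of_nonneg potential_nonneg, funext_iff, funext_iff]
  exact and_congr_left' diff_eq_zero_iff

end Order

end Stencil

theorem seven_point_stencil_posSemidef_general {G ι K : Type*} [AddGroup G] [Fintype G]
    [Fintype ι] [Field K] [LinearOrder K] [IsStrictOrderedRing K] [StarRing K] [TrivialStar K]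
    {e : ι → G} (he : Function.Injective e) (hne : ∀ i k, e i + e k ≠ 0)
    (hgen : AddSubgroup.closure (Set.range e) = ⊤)
    {h : K} (hh : h ≠ 0) {b : G → K} {α : ι → G → K} (hα : ∀ i j, 0 < α i j) (hb : ∀ j, 0 ≤ b j)
    {A : Matrix G G K}
    (hdiag : ∀ j, A j j = 1 / h ^ 2 * (∑ i, (α i j + α i (j - e i))) + b j)
    (hoff : ∀ j i, A j (j + e i) = -(1 / h ^ 2) * α i j ∧ A (j + e i) j = -(1 / h ^ 2) * α i j)
    (hzero : ∀ j k, k ≠ j → (∀ i, k ≠ j + e i ∧ k ≠ j - e i) → A j k = 0) :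
    A.PosSemidef ∧
      ∀ u : G → K, u ⬝ᵥ A *ᵥ u = 0 ↔ (∀ j k, u j = u k) ∧ ∀ j, b j * u j ^ 2 = 0 := by
  classical
  have hw (i : ι) (j : G) : 0 < 1 / h ^ 2 * α i j :=
    mul_pos (one_div_pos.mpr (by positivity)) (hα i j)
  obtain rfl : A = stencilMatrix e (fun i j ↦ 1 / h ^ 2 * α i j) b :=
    eq_stencilMatrix he hne (fun j ↦ by rw [hdiag, Finset.mul_sum]; simp only [mul_add])
      (fun j i ↦ by rw [(hoff j i).1, neg_mul]) (fun j i ↦ by rw [(hoff j i).2, neg_mul]) hzero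
  exact ⟨posSemidef_stencilMatrix (fun i j ↦ (hw i j).le) hb,
    dotProduct_stencilMatrix_mulVec_eq_zero_iff hw hb hgen⟩

/-- **Positive semidefiniteness and kernel of the periodic seven-point stencil matrix.**
On the periodic grid `(ZMod n)³` (with `n > 2`, grid spacing `h = 1/n`, unit shifts
`e i = Pi.single i 1`), if `αᵢ(j) > 0` and `b(j) ≥ 0` for all `i, j`, then the seven-point
stencil matrix `A` of `u ↦ -∇·(a∇u) + b u` is symmetric positive semidefinite, and
`uᵀ A u = 0` holds if and only if `u` is constant on the grid and `b(j)·u(j)² = 0` for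
all `j`. -/
theorem seven_point_stencil_posSemidef (n : ℕ) [NeZero n] (hn : 2 < n)
    (h : ℝ) (hh : h = 1 / n)
    (b : (Fin 3 → ZMod n) → ℝ) (α : Fin 3 → (Fin 3 → ZMod n) → ℝ)
    (hα : ∀ (i : Fin 3) j, 0 < α i j) (hb : ∀ j, 0 ≤ b j)
    (A : Matrix (Fin 3 → ZMod n) (Fin 3 → ZMod n) ℝ)
    (hdiag : ∀ j, A j j = 1 / h ^ 2 * (∑ i, (α i j + α i (j - Pi.single i 1))) + b j)
    (hoff : ∀ j (i : Fin 3), A j (j + Pi.single i 1) = -(1 / h ^ 2) * α i j ∧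
      A (j + Pi.single i 1) j = -(1 / h ^ 2) * α i j)
    (hzero : ∀ j k, k ≠ j →
      (∀ i : Fin 3, k ≠ j + Pi.single i 1 ∧ k ≠ j - Pi.single i 1) → A j k = 0) :
    A.PosSemidef ∧
      ∀ u : (Fin 3 → ZMod n) → ℝ,
        u ⬝ᵥ A.mulVec u = 0 ↔ ((∀ j k, u j = u k) ∧ ∀ j, b j * u j ^ 2 = 0) := by
  have : Fact (1 < n) := ⟨by omega⟩
  exact seven_point_stencil_posSemidef_general injective_single_one
    (single_one_add_single_one_ne_zero (zmod_two_ne_zero hn)) (closure_range_single_one_eq_top n)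
    (by simp [hh, NeZero.ne n]) hα hb hdiag hoff hzero
end
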